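/- arXiv:1910.10976 — 2 statements merged into one kernel-verified Lean document; each statement's English description precedes it below -/
import Mathlib

section
/- Let A ∈ ℝ^{m×n} satisfy the RIP of order K+1 with constant δ ∈ [0,1). Let x ∈ ℝ^n be K-sparse with support S = supp(x), let S' be a proper subset of S, set r = P_{S'}^⊥ A x, let j ∈ {1,…,n} \ S with P_{S'}^⊥ a_j ≠ 0, and put t = ‖x_{S\S'}‖₂ · |⟨r, a_j⟩| / ‖P_{S'}^⊥ a_j‖₂. Then ‖r‖₂² − 2t ≥ (1 − (1 + ‖P_{S'}^⊥ a_j‖₂²)·δ) · ‖x_{S\S'}‖₂² / ‖P_{S'}^⊥ a_j‖₂². -/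
open Finset

noncomputable section

/-- The support of a vector as a `Finset`. -/
def vsupp {n : ℕ} (x : Fin n → ℝ) : Finset (Fin n) :=
  Finset.univ.filter (fun i => x i ≠ 0)

/-- `A` satisfies the restricted isometry property of order `r` with constant `δ`. -/
def RIP {m n : ℕ} (A : Matrix (Fin m) (Fin n) ℝ) (r : ℕ) (δ : ℝ) : Prop :=
  ∀ x : Fin n → ℝ, (vsupp x).card ≤ r →
    (1 - δ) * (∑ i, x i ^ 2) ≤ (∑ i, (A.mulVec x) i ^ 2) ∧
      (∑ i, (A.mulVec x) i ^ 2) ≤ (1 + δ) * (∑ i, x i ^ 2)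

/-- The `j`-th column of `A`. -/
def col {m n : ℕ} (A : Matrix (Fin m) (Fin n) ℝ) (j : Fin n) : Fin m → ℝ :=
  fun i => A i j

/-- Euclidean dot product. -/
def dot {m : ℕ} (u v : Fin m → ℝ) : ℝ := ∑ i, u i * v i

/-- Squared Euclidean norm. -/
def nsq {m : ℕ} (v : Fin m → ℝ) : ℝ := ∑ i, v i ^ 2

/-- Euclidean norm. -/
def enorm {m : ℕ} (v : Fin m → ℝ) : ℝ := Real.sqrt (nsq v)

/-- Squared norm of the restriction of `x` to `T`. -/
def rsq {n : ℕ} (x : Fin n → ℝ) (T : Finset (Fin n)) : ℝ := ∑ i ∈ T, x i ^ 2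

/-- Norm of the restriction of `x` to `T`. -/
def rnorm {n : ℕ} (x : Fin n → ℝ) (T : Finset (Fin n)) : ℝ := Real.sqrt (rsq x T)

/-- Span of the columns of `A` indexed by `J`. -/
def colSpan {m n : ℕ} (A : Matrix (Fin m) (Fin n) ℝ) (J : Finset (Fin n)) :
    Submodule ℝ (EuclideanSpace ℝ (Fin m)) :=
  Submodule.span ℝ ((fun j => (WithLp.equiv 2 (Fin m → ℝ)).symm (col A j)) '' (J : Set (Fin n)))

/-- The projection `P_J^⊥ v` of `v` onto the orthogonal complement of the span of the
columns of `A` indexed by `J`. -/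
def projPerp {m n : ℕ} (A : Matrix (Fin m) (Fin n) ℝ) (J : Finset (Fin n)) (v : Fin m → ℝ) :
    Fin m → ℝ :=
  v - WithLp.equiv 2 (Fin m → ℝ)
    ((Submodule.orthogonalProjectionOnto (colSpan A J) ((WithLp.equiv 2 (Fin m → ℝ)).symm v) :
      EuclideanSpace ℝ (Fin m)))

/-- The OLS selection criterion value for index `j`, given measurements `y` and current
estimated support `Sk`. -/
def olsQuot {m n : ℕ} (A : Matrix (Fin m) (Fin n) ℝ) (y : Fin m → ℝ) (Sk : Finset (Fin n))
    (j : Fin n) : ℝ :=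
  |dot (projPerp A Sk y) (col A j)| / _root_.enorm (projPerp A Sk (col A j))

/-- The estimated support of OLS after `k` iterations (ties broken towards smaller index). -/
def olsSupp {m n : ℕ} (A : Matrix (Fin m) (Fin n) ℝ) (y : Fin m → ℝ) : ℕ → Finset (Fin n)
  | 0 => ∅
  | k + 1 =>
    let Sk := olsSupp A y k
    let cand := (Finset.univ \ Sk).filter
      (fun j => ∀ i ∈ Finset.univ \ Sk, olsQuot A y Sk i ≤ olsQuot A y Sk j)
    if h : cand.Nonempty then insert (cand.min' h) Sk else Sk

/-- The constant `C_K` from the paper. -/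
def CK (K : ℕ) : ℝ :=
  if K = 1 then 1 else if K = 2 then 2/3 else if K = 3 then 4/7 else 1 / Real.sqrt K

/-!
The lower RIP bound survives projection: `P_J^⊥ A z = A (z - w)` for some `w` supported in `J`, and
`z - w` agrees with `z` off `J`, so `(1 - δ) ‖z_{Jᶜ}‖² ≤ ‖P_J^⊥ A z‖²` as soon as `supp z ∪ J` is
small enough. Applied to `z = x + c e_j`, this bounds the quadratic
`c ↦ ‖r‖² + 2 c ⟨r, a_j⟩ + c² ‖P_J^⊥ a_j‖²` from below by `(1 - δ) (‖x_{S \ J}‖² + c²)`. The theorem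
is the case `|c| = ‖x_{S \ J}‖ / ‖P_J^⊥ a_j‖`, with the sign of `c` opposite to that of `⟨r, a_j⟩`.
-/

section EuclideanNorm

variable {m : ℕ}

lemma nsq_eq_norm_sq (v : Fin m → ℝ) : nsq v = ‖WithLp.toLp 2 v‖ ^ 2 :=
  (EuclideanSpace.real_norm_sq_eq _).symm

lemma dot_eq_inner (u v : Fin m → ℝ) :
    dot u v = inner ℝ (WithLp.toLp 2 u) (WithLp.toLp 2 v) := by
  simp [dot, PiLp.inner_apply, mul_comm]

lemma nsq_nonneg (v : Fin m → ℝ) : 0 ≤ nsq v :=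
  sum_nonneg fun _ _ ↦ sq_nonneg _

lemma nsq_pos {v : Fin m → ℝ} (hv : v ≠ 0) : 0 < nsq v := by
  rw [nsq_eq_norm_sq]
  exact pow_pos (norm_pos_iff.mpr (by simpa using hv)) 2

lemma nsq_add_smul (u v : Fin m → ℝ) (c : ℝ) :
    nsq (u + c • v) = nsq u + 2 * c * dot u v + c ^ 2 * nsq v := by
  simp only [nsq_eq_norm_sq, dot_eq_inner, WithLp.toLp_add, WithLp.toLp_smul, norm_add_sq_real,
    inner_smul_right, norm_smul, Real.norm_eq_abs, mul_pow, sq_abs, mul_assoc]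

end EuclideanNorm

section Restriction

variable {n : ℕ}

lemma notMem_vsupp {x : Fin n → ℝ} {i : Fin n} : i ∉ vsupp x ↔ x i = 0 := by
  simp [vsupp]

lemma vsupp_sub_subset (x y : Fin n → ℝ) : vsupp (x - y) ⊆ vsupp x ∪ vsupp y := by
  intro i
  contrapose!
  simp +contextual [notMem_vsupp]

lemma vsupp_add_smul_single_subset (x : Fin n → ℝ) (c : ℝ) (j : Fin n) :
    vsupp (x + c • Pi.single j 1) ⊆ insert j (vsupp x) := by
  intro i
  contrapose!
  simp +contextual [notMem_vsupp]

lemma rsq_nonneg (x : Fin n → ℝ) (T : Finset (Fin n)) : 0 ≤ rsq x T :=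
  sum_nonneg fun _ _ ↦ sq_nonneg _

lemma rsq_le_nsq (x : Fin n → ℝ) (T : Finset (Fin n)) : rsq x T ≤ nsq x :=
  sum_le_univ_sum_of_nonneg fun _ ↦ sq_nonneg _

lemma rsq_vsupp_sdiff (x : Fin n → ℝ) (J : Finset (Fin n)) : rsq x (vsupp x \ J) = rsq x Jᶜ := by
  refine sum_subset (fun i hi ↦ by simp_all) fun i hiJ hi ↦ ?_
  have hxi : x i = 0 := by simp_all [notMem_vsupp]
  simp [hxi]

lemma rsq_compl_sub_of_vsupp_subset {x w : Fin n → ℝ} {J : Finset (Fin n)} (hw : vsupp w ⊆ J) :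
    rsq (x - w) Jᶜ = rsq x Jᶜ := by
  refine sum_congr rfl fun i hi ↦ ?_
  have hwi : w i = 0 := notMem_vsupp.mp fun h ↦ mem_compl.mp hi (hw h)
  simp [hwi]

lemma rsq_add_smul_single {x : Fin n → ℝ} {T : Finset (Fin n)} {j : Fin n} (hjT : j ∈ T)
    (hxj : x j = 0) (c : ℝ) : rsq (x + c • Pi.single j 1) T = rsq x T + c ^ 2 := by
  have hoff : ∑ i ∈ T.erase j, (x + c • Pi.single j 1 : Fin n → ℝ) i ^ 2 =
      ∑ i ∈ T.erase j, x i ^ 2 :=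
    sum_congr rfl fun i hi ↦ by simp [ne_of_mem_erase hi]
  rw [rsq, rsq, ← sum_erase_add T _ hjT, ← sum_erase_add T _ hjT, hoff]
  simp [hxj]

end Restriction

section Projection

variable {m n : ℕ} (A : Matrix (Fin m) (Fin n) ℝ) (J : Finset (Fin n))

lemma toLp_projPerp (v : Fin m → ℝ) :
    WithLp.toLp 2 (projPerp A J v) = (colSpan A J)ᗮ.starProjection (WithLp.toLp 2 v) :=
  (Submodule.starProjection_orthogonal_val (K := colSpan A J) (WithLp.toLp 2 v)).symm

lemma projPerp_add_smul (u v : Fin m → ℝ) (c : ℝ) :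
    projPerp A J (u + c • v) = projPerp A J u + c • projPerp A J v := by
  apply WithLp.toLp_injective 2
  simp only [toLp_projPerp, WithLp.toLp_add, WithLp.toLp_smul, map_add, map_smul]

lemma dot_projPerp_projPerp (u v : Fin m → ℝ) :
    dot (projPerp A J u) (projPerp A J v) = dot (projPerp A J u) v := by
  simp only [dot_eq_inner, toLp_projPerp]
  rw [← Submodule.inner_starProjection_left_eq_right,
    Submodule.starProjection_eq_self_iff.mpr (Submodule.starProjection_apply_mem _ _)]

variable {J} in
lemma projPerp_col_of_mem {j : Fin n} (hj : j ∈ J) : projPerp A J (col A j) = 0 := by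
  apply WithLp.toLp_injective 2
  rw [toLp_projPerp, WithLp.toLp_zero]
  exact Submodule.starProjection_orthogonal_apply_eq_zero
    (Submodule.subset_span (Set.mem_image_of_mem _ hj))

lemma exists_projPerp_eq_sub_mulVec (v : Fin m → ℝ) :
    ∃ w : Fin n → ℝ, vsupp w ⊆ J ∧ projPerp A J v = v - A.mulVec w := by
  obtain ⟨a, ha⟩ := (Submodule.mem_span_image_finset_iff_exists_fun' ℝ).mp
    ((colSpan A J).starProjection_apply_mem (WithLp.toLp 2 v))
  refine ⟨fun i ↦ if i ∈ J then a i else 0, fun i ↦ by simp +contextual [vsupp], ?_⟩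
  refine congrArg (v - ·) ((congrArg WithLp.ofLp ha).symm.trans ?_)
  ext i
  simp [Matrix.mulVec, dotProduct, col, mul_comm]

end Projection

namespace RIP

variable {m n s K : ℕ} {A : Matrix (Fin m) (Fin n) ℝ} {δ : ℝ} {J : Finset (Fin n)}

lemma mul_rsq_compl_le_nsq_projPerp (hA : RIP A s δ) {z : Fin n → ℝ}
    (hz : (vsupp z ∪ J).card ≤ s) :
    (1 - δ) * rsq z Jᶜ ≤ nsq (projPerp A J (A.mulVec z)) := by
  rcases le_total δ 1 with hδ | hδ
  · obtain ⟨w, hwJ, hw⟩ := exists_projPerp_eq_sub_mulVec A J (A.mulVec z)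
    have hsparse : (vsupp (z - w)).card ≤ s :=
      (card_le_card ((vsupp_sub_subset z w).trans (union_subset_union_right hwJ))).trans hz
    calc (1 - δ) * rsq z Jᶜ = (1 - δ) * rsq (z - w) Jᶜ := by
          rw [rsq_compl_sub_of_vsupp_subset hwJ]
      _ ≤ (1 - δ) * nsq (z - w) :=
          mul_le_mul_of_nonneg_left (rsq_le_nsq _ _) (sub_nonneg.mpr hδ)
      _ ≤ nsq (A.mulVec (z - w)) := (hA _ hsparse).1
      _ = nsq (projPerp A J (A.mulVec z)) := by rw [hw, Matrix.mulVec_sub]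
  · exact (mul_nonpos_of_nonpos_of_nonneg (sub_nonpos.mpr hδ) (rsq_nonneg _ _)).trans (nsq_nonneg _)

lemma mul_rsq_add_sq_le (hA : RIP A (K + 1) δ) {x : Fin n → ℝ}
    (hK : (vsupp x ∪ J).card ≤ K) {j : Fin n} (hjx : j ∉ vsupp x) (hjJ : j ∉ J) (c : ℝ) :
    (1 - δ) * (rsq x (vsupp x \ J) + c ^ 2) ≤
      nsq (projPerp A J (A.mulVec x)) + 2 * c * dot (projPerp A J (A.mulVec x)) (col A j) +
        c ^ 2 * nsq (projPerp A J (col A j)) := by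
  have hsparse : (vsupp (x + c • Pi.single j 1) ∪ J).card ≤ K + 1 :=
    calc (vsupp (x + c • Pi.single j 1) ∪ J).card
        ≤ (insert j (vsupp x ∪ J)).card := by
          rw [← insert_union]
          exact card_le_card (union_subset_union_left (vsupp_add_smul_single_subset x c j))
      _ ≤ K + 1 := (card_insert_le _ _).trans (by gcongr)
  have himage : A.mulVec (x + c • Pi.single j 1) = A.mulVec x + c • col A j := by
    rw [Matrix.mulVec_add, Matrix.mulVec_smul, Matrix.mulVec_single_one]
    rfl
  rw [rsq_vsupp_sdiff, ← rsq_add_smul_single (mem_compl.mpr hjJ) (notMem_vsupp.mp hjx),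
    ← dot_projPerp_projPerp, ← nsq_add_smul, ← projPerp_add_smul, ← himage]
  exact hA.mul_rsq_compl_le_nsq_projPerp hsparse

end RIP

lemma sub_two_mul_sqrt_mul_abs_div_sqrt_ge {X N R d δ : ℝ} (hX : 0 ≤ X) (hN : 0 < N)
    (hquad : ∀ c : ℝ, (1 - δ) * (X + c ^ 2) ≤ R + 2 * c * d + c ^ 2 * N) :
    R - 2 * (√X * |d| / √N) ≥ (1 - (1 + N) * δ) * X / N := by
  have hsq : (√X / √N) ^ 2 = X / N := by rw [div_pow, Real.sq_sqrt hX, Real.sq_sqrt hN.le]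
  have habs : (1 - δ) * (X + X / N) ≤ R - 2 * (√X / √N) * |d| + X / N * N := by
    rw [← hsq]
    rcases abs_choice d with hd | hd <;> rw [hd]
    · linarith [hquad (-(√X / √N)), neg_sq (√X / √N)]
    · linarith [hquad (√X / √N)]
  calc (1 - (1 + N) * δ) * X / N = (1 - δ) * (X + X / N) - X / N * N := by field_simp; ring
    _ ≤ R - 2 * (√X / √N) * |d| := by linarith
    _ = R - 2 * (√X * |d| / √N) := by ring

theorem stmt2_general {m n K : ℕ} {A : Matrix (Fin m) (Fin n) ℝ} {δ : ℝ} (hRIP : RIP A (K + 1) δ)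
    {x : Fin n → ℝ} {J : Finset (Fin n)} (hK : (vsupp x ∪ J).card ≤ K) {j : Fin n}
    (hj : j ∉ vsupp x) (hproj : projPerp A J (col A j) ≠ 0) :
    nsq (projPerp A J (A.mulVec x)) -
        2 * (rnorm x (vsupp x \ J) * |dot (projPerp A J (A.mulVec x)) (col A j)| /
          _root_.enorm (projPerp A J (col A j))) ≥
      (1 - (1 + nsq (projPerp A J (col A j))) * δ) * rsq x (vsupp x \ J) /
        nsq (projPerp A J (col A j)) := by
  have hjJ : j ∉ J := mt (projPerp_col_of_mem A) hproj
  exact sub_two_mul_sqrt_mul_abs_div_sqrt_ge (rsq_nonneg _ _) (nsq_pos hproj)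
    (hRIP.mul_rsq_add_sq_le hK hj hjJ)

/-- under RIP of order `K+1` with `δ ∈ [0,1)`, with
`t = ‖x_{S\S'}‖₂ |⟨r, a_j⟩| / ‖P_{S'}^⊥ a_j‖₂`, one has
`‖r‖₂² − 2t ≥ (1 − (1 + ‖P_{S'}^⊥ a_j‖₂²) δ) ‖x_{S\S'}‖₂² / ‖P_{S'}^⊥ a_j‖₂²`. -/
theorem stmt2 {m n K : ℕ} (A : Matrix (Fin m) (Fin n) ℝ) (δ : ℝ)
    (hδ0 : 0 ≤ δ) (hδ1 : δ < 1)
    (hRIP : RIP A (K + 1) δ)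
    (x : Fin n → ℝ) (S : Finset (Fin n)) (hS : vsupp x = S) (hK : S.card ≤ K)
    (S' : Finset (Fin n)) (hS' : S' ⊂ S)
    (r : Fin m → ℝ) (hr : r = projPerp A S' (A.mulVec x))
    (j : Fin n) (hj : j ∉ S) (hproj : projPerp A S' (col A j) ≠ 0)
    (t : ℝ) (ht : t = rnorm x (S \ S') * |dot r (col A j)| / _root_.enorm (projPerp A S' (col A j))) :
    nsq r - 2 * t ≥
      (1 - (1 + nsq (projPerp A S' (col A j))) * δ) * rsq x (S \ S') /
        nsq (projPerp A S' (col A j)) := by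
  subst hS hr ht
  exact stmt2_general hRIP (by rwa [union_eq_left.mpr hS'.subset]) hj hproj
end
end

section
/- Fix an integer K ≥ 2 and let C_K = 2/3 if K = 2, C_3 = 4/7 if K = 3, and C_K = 1/√K if K ≥ 4. For every δ* ∈ [C_K, 1), there exist dimensions m, n, a matrix A ∈ ℝ^{m×n} with unit ℓ₂-norm columns, and a K-sparse vector x ∈ ℝ^n with 1 ∉ supp(x) such that: (a) A satisfies the RIP of order K+1 with constant δ*, and every δ ∈ [0,1) with which A satisfies the RIP of order K+1 satisfies δ ≥ δ*; and (b) |⟨A x, a_1⟩| ≥ |⟨A x, a_j⟩| for every j ∈ {1,…,n}. In particular, the first iteration of OLS (which, from S⁰ = ∅, selects an index maximizing j ↦ |⟨A x, a_j⟩| and breaks ties in favor of the smallest index) selects the incorrect index 1, so OLS fails to recover x from y = A x in K iterations. -/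
open Finset

noncomputable section

/-!
Only the Gram matrix `G = Aᵀ * A` matters. Take `G` of size `K + 1` with unit diagonal, the entry
`c` between the index `0` and every other index, and the entry `b ≤ 0` between any two nonzero
indices. On the vectors supported off `0` with zero sum, `G - 1` is multiplication by `-b`; on the
vectors that are constant off `0`, its two eigenvalues have sum `(K - 1) b` and product `-K c ^ 2`.
If `K c ^ 2 = δ (δ + (K - 1) b)`, the latter are `-δ` and `δ + (K - 1) b`, so the RIP constant of
order `K + 1` is exactly `δ`. For the vector `x` that is `0` at `0` and `1` elsewhere,
`G x` equals `K c` at `0` and `1 + (K - 1) b` elsewhere, so index `0` wins the first iteration as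
soon as `1 + (K - 1) b ≤ K c`. The constant `C_K` is the least `δ` for which some `b ≤ 0` achieves
this.
-/

open scoped Matrix

section Gram

variable {m n : ℕ} (A : Matrix (Fin m) (Fin n) ℝ)

lemma nsq_col (j : Fin n) : nsq (col A j) = (Aᵀ * A) j j := by
  simp [nsq, col, Matrix.mul_apply, sq]

lemma dot_mulVec_col (x : Fin n → ℝ) (j : Fin n) :
    dot (A *ᵥ x) (col A j) = ((Aᵀ * A) *ᵥ x) j := by
  rw [← Matrix.mulVec_mulVec]
  simp [dot, col, Matrix.mulVec, dotProduct, mul_comm]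

lemma sum_sq_mulVec (x : Fin n → ℝ) :
    ∑ i, (A *ᵥ x) i ^ 2 = x ⬝ᵥ (Aᵀ * A) *ᵥ x := by
  rw [← Matrix.mulVec_mulVec, Matrix.dotProduct_mulVec, Matrix.vecMul_transpose]
  simp [dotProduct, sq]

lemma card_vsupp_le (x : Fin n → ℝ) : (vsupp x).card ≤ n := by
  simpa using Finset.card_le_univ (vsupp x)

lemma card_vsupp_lt {x : Fin n → ℝ} {i : Fin n} (hi : x i = 0) : (vsupp x).card < n := by
  simpa using Finset.card_lt_univ_of_notMem (s := vsupp x) (x := i) (by simp [vsupp, hi])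

variable {A}

lemma RIP.one_sub_le_of_mulVec_eq_smul {r : ℕ} {δ μ : ℝ} {z : Fin n → ℝ} (hA : RIP A r δ)
    (hcard : (vsupp z).card ≤ r) (hz : z ≠ 0) (hμ : (Aᵀ * A) *ᵥ z = μ • z) : 1 - δ ≤ μ := by
  have hlower := (hA z hcard).1
  have hself : z ⬝ᵥ z = ∑ i, z i ^ 2 := by simp [dotProduct, sq]
  obtain ⟨i, hi⟩ := Function.ne_iff.1 hz
  have hpos : 0 < ∑ i, z i ^ 2 :=
    Finset.sum_pos' (fun _ _ => sq_nonneg _) ⟨i, Finset.mem_univ i, sq_pos_of_ne_zero hi⟩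
  rw [sum_sq_mulVec, hμ, dotProduct_smul, hself, smul_eq_mul] at hlower
  exact le_of_mul_le_mul_right hlower hpos

open scoped MatrixOrder Matrix.Norms.L2Operator in
lemma exists_transpose_mul_self_eq {ι : Type*} [Fintype ι] {G : Matrix ι ι ℝ}
    (hG : G.PosSemidef) : ∃ B : Matrix ι ι ℝ, Bᵀ * B = G := by
  classical
  obtain ⟨B, hB⟩ := CStarAlgebra.nonneg_iff_eq_star_mul_self.mp hG.nonneg
  exact ⟨B, by rw [hB, Matrix.star_eq_conjTranspose, Matrix.conjTranspose_eq_transpose_of_trivial]⟩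

end Gram

section OrthogonalLeastSquares

variable {m n : ℕ} (A : Matrix (Fin m) (Fin n) ℝ) (y : Fin m → ℝ)

lemma projPerp_empty (v : Fin m → ℝ) : projPerp A ∅ v = v := by
  have hbot : colSpan A ∅ = ⊥ := by simp [colSpan]
  simp [projPerp, hbot]

lemma olsQuot_empty (j : Fin n) :
    olsQuot A y ∅ j = |dot y (col A j)| / _root_.enorm (col A j) := by
  simp only [olsQuot, projPerp_empty]

lemma olsSupp_monotone : Monotone (olsSupp A y) := by
  refine monotone_nat_of_le_succ fun k => ?_
  rw [olsSupp]
  split_ifs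
  · exact Finset.subset_insert _ _
  · exact Finset.Subset.refl _

variable {A y}

lemma olsSupp_succ_eq_insert {k : ℕ} {j : Fin n} (hj : j ∉ olsSupp A y k)
    (hmax : ∀ i ∉ olsSupp A y k,
      olsQuot A y (olsSupp A y k) i ≤ olsQuot A y (olsSupp A y k) j)
    (hfirst : ∀ i ∉ olsSupp A y k,
      olsQuot A y (olsSupp A y k) j ≤ olsQuot A y (olsSupp A y k) i → j ≤ i) :
    olsSupp A y (k + 1) = insert j (olsSupp A y k) := by
  rw [olsSupp]
  split_ifs with hcand
  · congr 1
    refine le_antisymm (Finset.min'_le _ _ (by simpa [hj] using hmax)) ?_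
    refine Finset.le_min' _ _ _ fun i hi => ?_
    simp only [Finset.mem_filter, Finset.mem_sdiff, Finset.mem_univ, true_and] at hi
    exact hfirst i hi.1 (hi.2 j hj)
  · exact absurd ⟨j, by simpa [hj] using hmax⟩ hcand

lemma olsSupp_one_eq_singleton {j : Fin n} (hunit : ∀ i, nsq (col A i) = 1)
    (hmax : ∀ i, |dot y (col A i)| ≤ |dot y (col A j)|)
    (hfirst : ∀ i, |dot y (col A j)| ≤ |dot y (col A i)| → j ≤ i) :
    olsSupp A y 1 = {j} := by
  have hquot (i : Fin n) : olsQuot A y (olsSupp A y 0) i = |dot y (col A i)| := by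
    simp [olsSupp, olsQuot_empty, _root_.enorm, hunit]
  rw [olsSupp_succ_eq_insert (j := j) (by simp [olsSupp])
    (by simpa only [hquot] using fun i _ => hmax i)
    (by simpa only [hquot] using fun i _ => hfirst i)]
  simp [olsSupp]

lemma olsSupp_ne_of_mem_of_notMem {k l : ℕ} {j : Fin n} {S : Finset (Fin n)} (hkl : k ≤ l)
    (hj : j ∈ olsSupp A y k) (hjS : j ∉ S) : olsSupp A y l ≠ S :=
  fun h => hjS (h ▸ olsSupp_monotone A y hkl hj)

end OrthogonalLeastSquares

/-- The Gram matrix of `K + 1` unit vectors of which the `0`-th has inner product `c` with each of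
the others, while the others have pairwise inner products `b`. -/
def borderedGram (K : ℕ) (b c : ℝ) : Matrix (Fin (K + 1)) (Fin (K + 1)) ℝ :=
  Matrix.of fun i j => if i = j then 1 else if i = 0 ∨ j = 0 then c else b

section BorderedGram

variable (K : ℕ) (b c : ℝ)

lemma borderedGram_diag (i : Fin (K + 1)) : borderedGram K b c i i = 1 := by
  simp [borderedGram]

lemma borderedGram_isHermitian : (borderedGram K b c).IsHermitian := by
  ext i j
  simp [borderedGram, eq_comm, or_comm]

lemma borderedGram_mulVec_zero (z : Fin (K + 1) → ℝ) :
    (borderedGram K b c *ᵥ z) 0 = z 0 + c * ∑ i : Fin K, z i.succ := by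
  simp [Matrix.mulVec, dotProduct, borderedGram, Fin.sum_univ_succ, Finset.mul_sum,
    (Fin.succ_ne_zero _).symm]

lemma borderedGram_mulVec_succ (z : Fin (K + 1) → ℝ) (k : Fin K) :
    (borderedGram K b c *ᵥ z) k.succ =
      c * z 0 + (1 - b) * z k.succ + b * ∑ i : Fin K, z i.succ := by
  have hentry (i : Fin K) :
      borderedGram K b c k.succ i.succ = (if k = i then 1 - b else 0) + b := by
    by_cases h : k = i <;> simp [borderedGram, h, Fin.succ_ne_zero]
  have hborder : borderedGram K b c k.succ 0 = c := by simp [borderedGram, Fin.succ_ne_zero]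
  simp only [Matrix.mulVec, dotProduct, Fin.sum_univ_succ, hborder, hentry, add_mul,
    Finset.sum_add_distrib, ite_mul, zero_mul, Finset.sum_ite_eq, Finset.mem_univ, if_true,
    Finset.mul_sum, add_assoc]

lemma borderedGram_mulVec_cons_const (u v : ℝ) :
    borderedGram K b c *ᵥ Fin.cons u (fun _ => v) =
      Fin.cons (u + K * c * v) (fun _ => c * u + (1 + (K - 1) * b) * v) := by
  ext j
  refine Fin.cases ?_ (fun k => ?_) j
  · simp only [borderedGram_mulVec_zero, Fin.cons_zero, Fin.cons_succ, Finset.sum_const,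
      Finset.card_univ, Fintype.card_fin, nsmul_eq_mul]
    ring
  · simp only [borderedGram_mulVec_succ, Fin.cons_zero, Fin.cons_succ, Finset.sum_const,
      Finset.card_univ, Fintype.card_fin, nsmul_eq_mul]
    ring

lemma dotProduct_borderedGram_mulVec (z : Fin (K + 1) → ℝ) :
    z ⬝ᵥ borderedGram K b c *ᵥ z =
      ∑ i, z i ^ 2 + 2 * c * z 0 * (∑ i : Fin K, z i.succ) +
        b * ((∑ i : Fin K, z i.succ) ^ 2 - ∑ i : Fin K, z i.succ ^ 2) := by
  have hterm (i : Fin K) :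
      z i.succ * (c * z 0 + (1 - b) * z i.succ + b * ∑ j : Fin K, z j.succ) =
        (c * z 0 + b * ∑ j : Fin K, z j.succ) * z i.succ + (1 - b) * z i.succ ^ 2 := by
    ring
  simp only [dotProduct, Fin.sum_univ_succ, borderedGram_mulVec_zero, borderedGram_mulVec_succ,
    hterm, Finset.sum_add_distrib, ← Finset.mul_sum]
  ring

end BorderedGram

section Spectrum

lemma neg_mul_le_bordered_form {k δ b c w s q : ℝ} (hk : 0 < k) (hδ : 0 < δ) (hb : b ≤ 0)
    (hc : k * c ^ 2 = δ * (δ + (k - 1) * b)) (hsq : s ^ 2 ≤ k * q) :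
    -(δ * (w ^ 2 + q)) ≤ 2 * c * w * s + b * (s ^ 2 - q) := by
  have hsquares : k * δ * (δ * (w ^ 2 + q) + (2 * c * w * s + b * (s ^ 2 - q))) =
      k * (δ * w + c * s) ^ 2 + δ * (δ - b) * (k * q - s ^ 2) := by
    linear_combination -s ^ 2 * hc
  have hdev : 0 ≤ δ * (δ - b) * (k * q - s ^ 2) :=
    mul_nonneg (mul_nonneg hδ.le (by linarith)) (sub_nonneg.2 hsq)
  refine neg_le_iff_add_nonneg'.2 (nonneg_of_mul_nonneg_right (hsquares ▸ ?_) (mul_pos hk hδ))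
  exact add_nonneg (mul_nonneg hk.le (sq_nonneg _)) hdev

lemma bordered_form_le_mul {k δ b c w s q : ℝ} (hk : 2 ≤ k) (hδ : 0 < δ) (hb : b ≤ 0)
    (hc : k * c ^ 2 = δ * (δ + (k - 1) * b)) (hsq : s ^ 2 ≤ k * q) :
    2 * c * w * s + b * (s ^ 2 - q) ≤ δ * (w ^ 2 + q) := by
  have hk0 : 0 < k := by linarith
  have hδb : 0 ≤ δ + b := by
    have hle : 0 ≤ δ + (k - 1) * b :=
      nonneg_of_mul_nonneg_right (hc ▸ mul_nonneg hk0.le (sq_nonneg c)) hδ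
    nlinarith
  have hsquares : k * δ * (δ * (w ^ 2 + q) - (2 * c * w * s + b * (s ^ 2 - q))) =
      k * (δ * w - c * s) ^ 2 + δ * (δ + b) * (k * q - s ^ 2) +
        2 * δ * (k - 1) * (-b) * s ^ 2 := by
    linear_combination -s ^ 2 * hc
  have hdev : 0 ≤ δ * (δ + b) * (k * q - s ^ 2) :=
    mul_nonneg (mul_nonneg hδ.le hδb) (sub_nonneg.2 hsq)
  have hmean : 0 ≤ 2 * δ * (k - 1) * (-b) * s ^ 2 :=
    mul_nonneg (mul_nonneg (mul_nonneg (by positivity) (by linarith)) (by linarith)) (sq_nonneg s)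
  refine sub_nonneg.1 (nonneg_of_mul_nonneg_right (hsquares ▸ ?_) (mul_pos hk0 hδ))
  exact add_nonneg (add_nonneg (mul_nonneg hk0.le (sq_nonneg _)) hdev) hmean

variable {K : ℕ} {δ b c : ℝ}

lemma borderedGram_bounds (hK : 2 ≤ K) (hδ : 0 < δ) (hb : b ≤ 0)
    (hc : K * c ^ 2 = δ * (δ + (K - 1) * b)) (z : Fin (K + 1) → ℝ) :
    (1 - δ) * ∑ i, z i ^ 2 ≤ z ⬝ᵥ borderedGram K b c *ᵥ z ∧
      z ⬝ᵥ borderedGram K b c *ᵥ z ≤ (1 + δ) * ∑ i, z i ^ 2 := by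
  have hK' : (2 : ℝ) ≤ K := by exact_mod_cast hK
  have hsq : (∑ i : Fin K, z i.succ) ^ 2 ≤ K * ∑ i : Fin K, z i.succ ^ 2 := by
    simpa using sq_sum_le_card_mul_sum_sq (s := Finset.univ) (f := fun i : Fin K => z i.succ)
  have hlower := neg_mul_le_bordered_form (w := z 0) (by linarith) hδ hb hc hsq
  have hupper := bordered_form_le_mul (w := z 0) hK' hδ hb hc hsq
  rw [dotProduct_borderedGram_mulVec, Fin.sum_univ_succ]
  constructor <;> linarith

lemma borderedGram_posSemidef (hK : 2 ≤ K) (hδ : 0 < δ) (hδ1 : δ ≤ 1) (hb : b ≤ 0)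
    (hc : K * c ^ 2 = δ * (δ + (K - 1) * b)) : (borderedGram K b c).PosSemidef := by
  refine .of_dotProduct_mulVec_nonneg (borderedGram_isHermitian K b c) fun z => ?_
  have hsum : 0 ≤ (1 - δ) * ∑ i, z i ^ 2 :=
    mul_nonneg (by linarith) (Finset.sum_nonneg fun i _ => sq_nonneg _)
  simpa using hsum.trans (borderedGram_bounds hK hδ hb hc z).1

lemma borderedGram_mulVec_eq_smul (hc : K * c ^ 2 = δ * (δ + (K - 1) * b)) :
    borderedGram K b c *ᵥ Fin.cons (-(K * c)) (fun _ => δ) =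
      (1 - δ) • (Fin.cons (-(K * c)) (fun _ => δ) : Fin (K + 1) → ℝ) := by
  rw [borderedGram_mulVec_cons_const]
  ext j
  refine Fin.cases ?_ (fun k => ?_) j
  · simp only [Fin.cons_zero, Pi.smul_apply, smul_eq_mul]
    ring
  · simp only [Fin.cons_succ, Pi.smul_apply, smul_eq_mul]
    linear_combination -hc

variable {m : ℕ} {A : Matrix (Fin m) (Fin (K + 1)) ℝ}

lemma rip_of_gram_eq_borderedGram (hA : Aᵀ * A = borderedGram K b c) (hK : 2 ≤ K) (hδ : 0 < δ)
    (hb : b ≤ 0) (hc : K * c ^ 2 = δ * (δ + (K - 1) * b)) (r : ℕ) : RIP A r δ := by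
  intro z _
  rw [sum_sq_mulVec, hA]
  exact borderedGram_bounds hK hδ hb hc z

lemma RIP.le_of_gram_eq_borderedGram {δ' : ℝ} (hrip : RIP A (K + 1) δ')
    (hA : Aᵀ * A = borderedGram K b c) (hK : K ≠ 0) (hδ : δ ≠ 0)
    (hc : K * c ^ 2 = δ * (δ + (K - 1) * b)) : δ ≤ δ' := by
  have hne : (Fin.cons (-(K * c)) (fun _ => δ) : Fin (K + 1) → ℝ) ≠ 0 := fun h =>
    hδ (congrFun h (Fin.succ ⟨0, Nat.pos_of_ne_zero hK⟩))
  have := hrip.one_sub_le_of_mulVec_eq_smul (card_vsupp_le _) hne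
    (hA ▸ borderedGram_mulVec_eq_smul hc)
  linarith

lemma abs_dot_col_le_of_gram_eq_borderedGram (hA : Aᵀ * A = borderedGram K b c)
    (hbc : |1 + (K - 1) * b| ≤ |K * c|) (j : Fin (K + 1)) :
    |dot (A *ᵥ Fin.cons 0 (fun _ => 1)) (col A j)| ≤
      |dot (A *ᵥ Fin.cons 0 (fun _ => 1)) (col A 0)| := by
  rw [dot_mulVec_col, dot_mulVec_col, hA, borderedGram_mulVec_cons_const]
  refine Fin.cases le_rfl (fun k => ?_) j
  simpa using hbc

end Spectrum

section Parameters

variable {K : ℕ} {δ : ℝ}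

lemma CK_pos (hK : K ≠ 0) : 0 < CK K := by
  unfold CK
  split_ifs <;> positivity

-- Minimising `δ` subject to `(1 + t) ^ 2 ≤ K δ (δ + t)` over `t = (K - 1) b ≤ 0` gives
-- `t = (K - 4) / (K + 4)` and `δ = 4 / (K + 4)` for `K ≤ 4`, and `t = 0` for `K ≥ 4`.
lemma exists_nonpos_sq_le_mul (hK : 2 ≤ K) (hδ : CK K ≤ δ) :
    ∃ b ≤ 0, (1 + (K - 1) * b) ^ 2 ≤ K * (δ * (δ + (K - 1) * b)) := by
  unfold CK at hδ
  split_ifs at hδ with h1 h2 h3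
  · omega
  · subst h2
    refine ⟨-1 / 3, by norm_num, ?_⟩
    push_cast
    nlinarith
  · subst h3
    refine ⟨-1 / 14, by norm_num, ?_⟩
    push_cast
    nlinarith
  · have hK0 : (0 : ℝ) < K := by positivity
    have hsq : (1 / √K) ^ 2 ≤ δ ^ 2 := by gcongr
    rw [div_pow, Real.sq_sqrt hK0.le, one_pow, div_le_iff₀ hK0] at hsq
    exact ⟨0, le_rfl, by linarith⟩

lemma exists_borderedGram_params (hK : 2 ≤ K) (hδ : CK K ≤ δ) :
    ∃ b c : ℝ, b ≤ 0 ∧ K * c ^ 2 = δ * (δ + (K - 1) * b) ∧ |1 + (K - 1) * b| ≤ |K * c| := by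
  obtain ⟨b, hb, hle⟩ := exists_nonpos_sq_le_mul hK hδ
  have hK0 : (0 : ℝ) < K := by positivity
  have hnonneg : 0 ≤ δ * (δ + (K - 1) * b) :=
    nonneg_of_mul_nonneg_right ((sq_nonneg _).trans hle) hK0
  have hc : K * √(δ * (δ + (K - 1) * b) / K) ^ 2 = δ * (δ + (K - 1) * b) := by
    rw [Real.sq_sqrt (by positivity), mul_div_cancel₀ _ hK0.ne']
  refine ⟨b, √(δ * (δ + (K - 1) * b) / K), hb, hc, sq_le_sq.1 ?_⟩
  calc (1 + (K - 1) * b) ^ 2 ≤ K * (δ * (δ + (K - 1) * b)) := hle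
    _ = (K * √(δ * (δ + (K - 1) * b) / K)) ^ 2 := by linear_combination -(K : ℝ) * hc

end Parameters

/-- Theorem 2 of the paper: for every `K ≥ 2` and `δ* ∈ [C_K, 1)`, there
exist a unit-column matrix `A` whose RIP constant of order `K+1` is exactly `δ*` and a
`K`-sparse vector `x` such that the first OLS iteration selects an incorrect index `j₀`,
and OLS fails to recover `x` in `K` iterations. -/
theorem stmt12 (K : ℕ) (hK : 2 ≤ K) (δ : ℝ) (hδ1 : CK K ≤ δ) (hδ2 : δ < 1) :
    ∃ (m n : ℕ) (A : Matrix (Fin m) (Fin n) ℝ) (x : Fin n → ℝ) (j₀ : Fin n),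
      (∀ j, nsq (col A j) = 1) ∧
      (vsupp x).card ≤ K ∧
      j₀ ∉ vsupp x ∧
      RIP A (K + 1) δ ∧
      (∀ δ' : ℝ, 0 ≤ δ' → δ' < 1 → RIP A (K + 1) δ' → δ ≤ δ') ∧
      (∀ j, |dot (A.mulVec x) (col A j)| ≤ |dot (A.mulVec x) (col A j₀)|) ∧
      olsSupp A (A.mulVec x) 1 = {j₀} ∧
      olsSupp A (A.mulVec x) K ≠ vsupp x := by
  obtain ⟨b, c, hb, hc, hbc⟩ := exists_borderedGram_params hK hδ1
  have hK0 : K ≠ 0 := by omega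
  have hδ : 0 < δ := (CK_pos hK0).trans_le hδ1
  obtain ⟨A, hA⟩ := exists_transpose_mul_self_eq (borderedGram_posSemidef hK hδ hδ2.le hb hc)
  have hunit (j) : nsq (col A j) = 1 := by rw [nsq_col, hA, borderedGram_diag]
  have hmax := abs_dot_col_le_of_gram_eq_borderedGram hA hbc
  have hone := olsSupp_one_eq_singleton hunit hmax fun i _ => Fin.zero_le i
  have hwrong : 0 ∉ vsupp (Fin.cons 0 (fun _ => 1) : Fin (K + 1) → ℝ) := by simp [vsupp]
  exact ⟨K + 1, K + 1, A, Fin.cons 0 (fun _ => 1), 0, hunit,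
    Nat.le_of_lt_succ (card_vsupp_lt (i := 0) rfl), hwrong,
    rip_of_gram_eq_borderedGram hA hK hδ hb hc _,
    fun δ' _ _ hrip => hrip.le_of_gram_eq_borderedGram hA hK0 hδ.ne' hc,
    hmax, hone, olsSupp_ne_of_mem_of_notMem (by omega) (hone ▸ Finset.mem_singleton_self 0) hwrong⟩
end
end
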